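/- Let σ > 0, N ≥ 1, and let F be a continuous nondecreasing solution of equation (E) with values in (m, M). Then lim_{x→∞} F(x) = M, lim_{x→−∞} F(x) = m, and F is strictly increasing. -/

import Mathlib

open MeasureTheory Filter Set

/-- Centered Gaussian density with variance `σ²`. -/
noncomputable def gq (σ z : ℝ) : ℝ :=
  Real.exp (-(z ^ 2) / (2 * σ ^ 2)) / (σ * Real.sqrt (2 * Real.pi))

/-- The averaged kernel `q̄(σ,x,z)`. -/
noncomputable def gqbar (σ x z : ℝ) : ℝ :=
  if x = 0 then gq σ z else (1 / x) * ∫ y in (0:ℝ)..x, gq σ (y - z)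

/-- `Φ⁺(y) = E[V·1_{V>y}]`. -/
noncomputable def Phip {Ω : Type*} [MeasurableSpace Ω] (P : Measure Ω) (V : Ω → ℝ) (y : ℝ) : ℝ :=
  ∫ ω in {ω | V ω > y}, V ω ∂P

/-- `Π⁺(y) = P(V > y)`. -/
noncomputable def Pip {Ω : Type*} [MeasurableSpace Ω] (P : Measure Ω) (V : Ω → ℝ) (y : ℝ) : ℝ :=
  (P {ω | V ω > y}).toReal

/-- `Φ⁻(y) = E[V·1_{V≤y}]`. -/
noncomputable def Phim {Ω : Type*} [MeasurableSpace Ω] (P : Measure Ω) (V : Ω → ℝ) (y : ℝ) : ℝ :=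
  ∫ ω in {ω | V ω ≤ y}, V ω ∂P

/-- `Π⁻(y) = P(V ≤ y)`. -/
noncomputable def Pim {Ω : Type*} [MeasurableSpace Ω] (P : Measure Ω) (V : Ω → ℝ) (y : ℝ) : ℝ :=
  (P {ω | V ω ≤ y}).toReal

/-- `Ψ⁺ = Φ⁺/Π⁺`. -/
noncomputable def Psip {Ω : Type*} [MeasurableSpace Ω] (P : Measure Ω) (V : Ω → ℝ) (y : ℝ) : ℝ :=
  Phip P V y / Pip P V y

/-- `Ψ⁻ = Φ⁻/Π⁻`. -/
noncomputable def Psim {Ω : Type*} [MeasurableSpace Ω] (P : Measure Ω) (V : Ω → ℝ) (y : ℝ) : ℝ :=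
  Phim P V y / Pim P V y

/-- `φ⁺_g`. -/
noncomputable def phip {Ω : Type*} [MeasurableSpace Ω] (P : Measure Ω) (V : Ω → ℝ)
    (σ : ℝ) (g : ℝ → ℝ) (x : ℝ) : ℝ :=
  (∫ z, Phip P V (g z) * gq σ (x - z)) / (∫ z, Pip P V (g z) * gq σ (x - z))

/-- `φ⁻_g`. -/
noncomputable def phim {Ω : Type*} [MeasurableSpace Ω] (P : Measure Ω) (V : Ω → ℝ)
    (σ : ℝ) (g : ℝ → ℝ) (x : ℝ) : ℝ :=
  (∫ z, Phim P V (g z) * gq σ (x - z)) / (∫ z, Pim P V (g z) * gq σ (x - z))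

/-- `φ_g`, equal to `φ⁺_g` on `[0,∞)` and `φ⁻_g` on `(−∞,0)`. -/
noncomputable def phig {Ω : Type*} [MeasurableSpace Ω] (P : Measure Ω) (V : Ω → ℝ)
    (σ : ℝ) (g : ℝ → ℝ) (x : ℝ) : ℝ :=
  if 0 ≤ x then phip P V σ g x else phim P V σ g x

/-- The interior of the support of the law of `V` is `(m, M)` (with `V` bounded). -/
def SuppIoo {Ω : Type*} [MeasurableSpace Ω] (P : Measure Ω) (V : Ω → ℝ) (m M : ℝ) : Prop :=
  m < M ∧ (∀ᵐ ω ∂P, V ω ∈ Set.Icc m M) ∧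
    (∀ y < M, 0 < P {ω | V ω > y}) ∧ (∀ y, m < y → 0 < P {ω | V ω ≤ y})

/-- Equation (E). -/
def SolvesE {Ω : Type*} [MeasurableSpace Ω] (P : Measure Ω) (V : Ω → ℝ)
    (σ : ℝ) (N : ℕ) (F : ℝ → ℝ) : Prop :=
  ∀ x : ℝ, F x =
    ∫ z, ((1 / (N:ℝ)) * gq σ (x - z) + (((N:ℝ) - 1) / (N:ℝ)) * gqbar σ x z) * phig P V σ F z


lemma gq_eq (σ : ℝ) (hσ : 0 < σ) :
    gq σ = ProbabilityTheory.gaussianPDFReal 0 (Real.toNNReal (σ ^ 2)) := by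
  funext z
  unfold gq ProbabilityTheory.gaussianPDFReal
  have : Real.sqrt (2 * Real.pi * σ ^ 2) = σ * Real.sqrt (2 * Real.pi) := by
    rw [Real.sqrt_mul (by positivity), Real.sqrt_sq hσ.le, mul_comm]
  simp only [Real.coe_toNNReal _ (sq_nonneg σ), sub_zero, this]
  rw [div_eq_inv_mul]

lemma gq_pos (σ : ℝ) (hσ : 0 < σ) (z : ℝ) : 0 < gq σ z := by
  unfold gq; positivity

lemma gq_cont (σ : ℝ) : Continuous (gq σ) := by
  unfold gq; fun_prop

lemma gq_int (σ : ℝ) (hσ : 0 < σ) : Integrable (gq σ) := by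
  rw [gq_eq σ hσ]; exact ProbabilityTheory.integrable_gaussianPDFReal _ _

lemma gq_one (σ : ℝ) (hσ : 0 < σ) : ∫ z, gq σ z = 1 := by
  rw [gq_eq σ hσ]
  apply ProbabilityTheory.integral_gaussianPDFReal_eq_one
  intro h
  have h2 : 0 < σ ^ 2 := by positivity
  have := Real.toNNReal_pos.mpr h2
  exact this.ne' h

lemma gq_shift_int (σ : ℝ) (hσ : 0 < σ) (x : ℝ) : Integrable (fun z => gq σ (x - z)) :=
  (gq_int σ hσ).comp_sub_left x

lemma gq_shift_one (σ : ℝ) (hσ : 0 < σ) (x : ℝ) : ∫ z, gq σ (x - z) = 1 := by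
  rw [integral_sub_left_eq_self (gq σ) volume x, gq_one σ hσ]

noncomputable def cv (σ : ℝ) (h : ℝ → ℝ) (x : ℝ) : ℝ := ∫ z, h z * gq σ (x - z)

lemma cv_eq (σ : ℝ) (h : ℝ → ℝ) (x : ℝ) : cv σ h x = ∫ u, h (x - u) * gq σ u := by
  unfold cv
  rw [← integral_sub_left_eq_self (fun u => h (x - u) * gq σ u) volume x]
  simp

lemma cv_integrable (σ : ℝ) (hσ : 0 < σ) (h : ℝ → ℝ) (hm : Measurable h) (C : ℝ)
    (hC : ∀ z, |h z| ≤ C) (x : ℝ) : Integrable (fun z => h z * gq σ (x - z)) :=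
  (gq_shift_int σ hσ x).bdd_mul hm.aestronglyMeasurable (Eventually.of_forall hC)

lemma cv_integrable' (σ : ℝ) (hσ : 0 < σ) (h : ℝ → ℝ) (hm : Measurable h) (C : ℝ)
    (hC : ∀ z, |h z| ≤ C) (x : ℝ) : Integrable (fun u => h (x - u) * gq σ u) :=
  (gq_int σ hσ).bdd_mul (hm.comp (by fun_prop)).aestronglyMeasurable
    (Eventually.of_forall fun u => hC _)

lemma cv_tendsto (σ : ℝ) (hσ : 0 < σ) (h : ℝ → ℝ) (hm : Measurable h) (C : ℝ)
    (hC : ∀ z, |h z| ≤ C) (l : Filter ℝ) [l.IsCountablyGenerated]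
    (hl : ∀ u : ℝ, Tendsto (fun x => x - u) l l) (c : ℝ) (hc : Tendsto h l (nhds c)) :
    Tendsto (cv σ h) l (nhds c) := by
  have e : c = ∫ u, c * gq σ u := by rw [integral_const_mul, gq_one σ hσ, mul_one]
  have e2 : cv σ h = fun x => ∫ u, h (x - u) * gq σ u := funext (cv_eq σ h)
  rw [e2, e]
  apply tendsto_integral_filter_of_dominated_convergence (fun u => C * gq σ u)
  · exact Eventually.of_forall fun x => (cv_integrable' σ hσ h hm C hC x).aestronglyMeasurable
  · refine Eventually.of_forall fun x => Eventually.of_forall fun u => ?_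
    rw [norm_mul, Real.norm_eq_abs, Real.norm_of_nonneg (gq_pos σ hσ u).le]
    exact mul_le_mul_of_nonneg_right (hC _) (gq_pos σ hσ u).le
  · exact (gq_int σ hσ).const_mul C
  · exact Eventually.of_forall fun u => (hc.comp (hl u)).mul_const _

lemma cv_mono_fun (σ : ℝ) (hσ : 0 < σ) (h k : ℝ → ℝ) (hm : Measurable h) (km : Measurable k)
    (C D : ℝ) (hC : ∀ z, |h z| ≤ C) (hD : ∀ z, |k z| ≤ D) (hk : ∀ z, h z ≤ k z) (x : ℝ) :
    cv σ h x ≤ cv σ k x :=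
  integral_mono (cv_integrable σ hσ h hm C hC x) (cv_integrable σ hσ k km D hD x)
    fun z => mul_le_mul_of_nonneg_right (hk z) (gq_pos σ hσ _).le

lemma cv_pos (σ : ℝ) (hσ : 0 < σ) (h : ℝ → ℝ) (hm : Measurable h) (C : ℝ)
    (hC : ∀ z, |h z| ≤ C) (hp : ∀ z, 0 < h z) (x : ℝ) : 0 < cv σ h x := by
  have hp' : ∀ z, 0 < h z * gq σ (x - z) := fun z => mul_pos (hp z) (gq_pos σ hσ _)
  unfold cv
  rw [integral_pos_iff_support_of_nonneg (fun z => (hp' z).le) (cv_integrable σ hσ h hm C hC x)]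
  have : Function.support (fun z => h z * gq σ (x - z)) = univ := by
    ext z; simp only [Function.mem_support, mem_univ, iff_true]; exact (hp' z).ne'
  rw [this]; simp

lemma cv_sub_smul (σ : ℝ) (hσ : 0 < σ) (A B : ℝ → ℝ) (hA : Measurable A) (hB : Measurable B)
    (C D : ℝ) (hC : ∀ z, |A z| ≤ C) (hD : ∀ z, |B z| ≤ D) (c x : ℝ) :
    cv σ (fun z => A z - c * B z) x = cv σ A x - c * cv σ B x := by
  unfold cv
  rw [← integral_const_mul, ← integral_sub (cv_integrable σ hσ A hA C hC x)
    ((cv_integrable σ hσ B hB D hD x).const_mul c)]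
  congr 1; funext z; ring

lemma gq_ratio (σ : ℝ) (hσ : 0 < σ) (x x' z : ℝ) :
    gq σ (x' - z) = Real.exp ((x' - x) * (2 * z - x - x') / (2 * σ ^ 2)) * gq σ (x - z) := by
  unfold gq
  rw [mul_div_assoc', ← Real.exp_add]
  congr 2
  field_simp
  ring

/-- Ratio of convolutions is monotone under single crossing. -/
lemma rt_mono (σ : ℝ) (hσ : 0 < σ) (A B : ℝ → ℝ) (hA : Measurable A) (hB : Measurable B)
    (C D : ℝ) (hC : ∀ z, |A z| ≤ C) (hD : ∀ z, |B z| ≤ D) (hp : ∀ z, 0 < B z)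
    (hcr : ∀ c z z', z ≤ z' → 0 ≤ A z - c * B z → 0 ≤ A z' - c * B z') :
    Monotone (fun x => cv σ A x / cv σ B x) := by
  intro x x' hx
  have hBx := cv_pos σ hσ B hB D hD hp x
  have hBx' := cv_pos σ hσ B hB D hD hp x'
  simp only
  rw [le_div_iff₀ hBx']
  set c := cv σ A x / cv σ B x with hc
  have h0 : cv σ (fun z => A z - c * B z) x = 0 := by
    rw [cv_sub_smul σ hσ A B hA hB C D hC hD, hc]
    field_simp; simp
  suffices 0 ≤ cv σ (fun z => A z - c * B z) x' by
    rw [cv_sub_smul σ hσ A B hA hB C D hC hD] at this; linarith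
  have hmeas : Measurable (fun z => A z - c * B z) := by fun_prop
  have hbd : ∀ z, |A z - c * B z| ≤ C + |c| * D := fun z => by
    calc |A z - c * B z| ≤ |A z| + |c * B z| := abs_sub _ _
      _ ≤ C + |c| * D := by
        rw [abs_mul]; exact add_le_add (hC z) (mul_le_mul_of_nonneg_left (hD z) (abs_nonneg _))
  set h := fun z => A z - c * B z with hh
  have hcr' : ∀ z z', z ≤ z' → 0 ≤ h z → 0 ≤ h z' := fun z z' => hcr c z z'
  by_cases hall : ∀ z, 0 ≤ h z
  · exact integral_nonneg fun z => mul_nonneg (hall z) (gq_pos σ hσ _).le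
  push Not at hall
  obtain ⟨z1, hz1⟩ := hall
  have hne : ∃ z, 0 ≤ h z := by
    by_contra hn
    push Not at hn
    have := cv_pos σ hσ (fun z => - h z) hmeas.neg (C + |c| * D)
      (fun z => by rw [abs_neg]; exact hbd z) (fun z => by have := hn z; linarith) x
    have e : cv σ (fun z => - h z) x = - cv σ h x := by
      unfold cv; rw [← integral_neg]; congr 1; funext z; ring
    rw [e, h0] at this; simp at this
  set S := {z | 0 ≤ h z} with hS
  have hSb : BddBelow S := ⟨z1, fun z hz => by
    by_contra hlt
    push Not at hlt
    have := hcr' z z1 hlt.le hz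
    linarith⟩
  set z0 := sInf S with hz0
  have hlow : ∀ z, z < z0 → h z ≤ 0 := fun z hz => by
    by_contra hn
    push Not at hn
    have : z0 ≤ z := csInf_le hSb hn.le
    linarith
  have hup : ∀ z, z0 < z → 0 ≤ h z := fun z hz => by
    obtain ⟨w, hw, hwz⟩ := exists_lt_of_csInf_lt hne hz
    exact hcr' w z hwz.le hw
  let r : ℝ → ℝ := fun z => Real.exp ((x' - x) * (2 * z - x - x') / (2 * σ ^ 2))
  have hr : Monotone r := fun a b hab => by
    apply Real.exp_le_exp.mpr
    apply div_le_div_of_nonneg_right _ (by positivity)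
    apply mul_le_mul_of_nonneg_left _ (by linarith)
    linarith
  have key : r z0 * cv σ h x ≤ cv σ h x' := by
    unfold cv
    rw [← integral_const_mul]
    apply integral_mono ((cv_integrable σ hσ h hmeas _ hbd x).const_mul _)
      (cv_integrable σ hσ h hmeas _ hbd x')
    intro z
    have hg := gq_pos σ hσ (x - z)
    have e : gq σ (x' - z) = r z * gq σ (x - z) := gq_ratio σ hσ x x' z
    simp only [e]
    have : 0 ≤ (r z - r z0) * h z := by
      rcases lt_trichotomy z z0 with hz | hz | hz
      · exact mul_nonneg_of_nonpos_of_nonpos (by linarith [hr hz.le]) (hlow z hz)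
      · simp [hz]
      · exact mul_nonneg (by linarith [hr hz.le]) (hup z hz)
    nlinarith [mul_nonneg this hg.le]
  rw [h0, mul_zero] at key
  exact key

lemma cv_abs (σ : ℝ) (hσ : 0 < σ) (h : ℝ → ℝ) (C : ℝ)
    (hC : ∀ z, |h z| ≤ C) (x : ℝ) : |cv σ h x| ≤ C := by
  have := norm_integral_le_of_norm_le ((gq_shift_int σ hσ x).const_mul C)
    (f := fun z => h z * gq σ (x - z)) (Eventually.of_forall fun z => by
      rw [norm_mul, Real.norm_eq_abs, Real.norm_of_nonneg (gq_pos σ hσ _).le]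
      exact mul_le_mul_of_nonneg_right (hC _) (gq_pos σ hσ _).le)
  rw [integral_const_mul, gq_shift_one σ hσ, mul_one] at this
  exact this

lemma cv_mono (σ : ℝ) (hσ : 0 < σ) (h : ℝ → ℝ) (hm : Monotone h) (C : ℝ)
    (hC : ∀ z, |h z| ≤ C) : Monotone (cv σ h) := fun x y hxy => by
  rw [cv_eq, cv_eq]
  exact integral_mono (cv_integrable' σ hσ h hm.measurable C hC x)
    (cv_integrable' σ hσ h hm.measurable C hC y)
    fun u => mul_le_mul_of_nonneg_right (hm (by linarith)) (gq_pos σ hσ u).le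

lemma cv_strictMono (σ : ℝ) (hσ : 0 < σ) (h : ℝ → ℝ) (hm : Monotone h) (C : ℝ)
    (hC : ∀ z, |h z| ≤ C) (a b : ℝ) (hab : a ≠ b) (ht : Tendsto (cv σ h) atTop (nhds b))
    (hb : Tendsto (cv σ h) atBot (nhds a)) : StrictMono (cv σ h) := by
  intro x y hxy
  refine lt_of_le_of_ne (cv_mono σ hσ h hm C hC hxy.le) fun heq => hab ?_
  set d := y - x with hd
  have hd0 : 0 < d := by linarith
  have hIx := cv_integrable σ hσ h hm.measurable C hC x
  have hmd : Monotone (fun z => h (z + d)) := fun a b hab => hm (by linarith)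
  have hId := cv_integrable σ hσ _ hmd.measurable C (fun z => hC _) x
  have shift : ∀ w, cv σ (fun z => h (z + d)) w = cv σ h (w + d) := fun w => by
    rw [cv_eq, cv_eq]; congr 1; funext u; congr 2; ring
  have h0 : ∫ z, (h (z + d) - h z) * gq σ (x - z) = 0 := by
    have e : cv σ (fun z => h (z + d)) x - cv σ h x = 0 := by
      rw [shift, show x + d = y by rw [hd]; ring, heq, sub_self]
    unfold cv at e
    rw [← integral_sub hId hIx] at e
    rw [← e]; congr 1; funext z; ring
  have hI : Integrable (fun z => (h (z + d) - h z) * gq σ (x - z)) := by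
    convert hId.sub hIx using 1
    funext z; simp only [Pi.sub_apply]; ring
  rw [integral_eq_zero_iff_of_nonneg (fun z => mul_nonneg
    (by have := hm (show z ≤ z + d by linarith); linarith) (gq_pos σ hσ _).le) hI] at h0
  have per : ∀ w, cv σ h (w + d) = cv σ h w := fun w => by
    rw [← shift]
    unfold cv
    apply integral_congr_ae
    filter_upwards [h0] with z hz
    have : h (z + d) - h z = 0 := by
      rcases mul_eq_zero.mp hz with h1 | h1
      · exact h1
      · exact absurd h1 (gq_pos σ hσ _).ne'
    rw [show h (z + d) = h z by linarith]
  have pn : ∀ n : ℕ, cv σ h (n * d) = cv σ h 0 := fun n => by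
    induction n with
    | zero => simp
    | succ k ih => rw [← ih, ← per (k * d)]; congr 1; push_cast; ring
  have pn' : ∀ n : ℕ, cv σ h (-(n * d)) = cv σ h 0 := fun n => by
    induction n with
    | zero => simp
    | succ k ih => rw [← ih, ← per]; congr 1; push_cast; ring
  have t1 : Tendsto (fun n : ℕ => (n : ℝ) * d) atTop atTop :=
    tendsto_natCast_atTop_atTop.atTop_mul_const hd0
  have l1 := ht.comp t1
  have l2 := hb.comp (tendsto_neg_atTop_atBot.comp t1)
  simp only [Function.comp_def, pn, pn'] at l1 l2
  exact (tendsto_nhds_unique l2 tendsto_const_nhds).trans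
    (tendsto_nhds_unique tendsto_const_nhds l1)

lemma gqbar_eq (σ x z : ℝ) : gqbar σ x z = ∫ t in (0:ℝ)..1, gq σ (t * x - z) := by
  unfold gqbar
  split_ifs with hx
  · subst hx; simp [gq]
  · rw [intervalIntegral.integral_comp_mul_right (fun y => gq σ (y - z)) hx]
    simp

lemma bar_norm (σ : ℝ) (hσ : 0 < σ) (h : ℝ → ℝ) (C : ℝ)
    (hC : ∀ z, |h z| ≤ C) (x : ℝ) : ∫ z, ‖h z * gq σ (x - z)‖ ≤ C := by
  have := cv_abs σ hσ (fun z => |h z|) C (fun z => by rw [abs_abs]; exact hC z) x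
  have e : cv σ (fun z => |h z|) x = ∫ z, ‖h z * gq σ (x - z)‖ := by
    unfold cv
    congr 1; funext z
    rw [norm_mul, Real.norm_of_nonneg (gq_pos σ hσ _).le, Real.norm_eq_abs]
  rw [e] at this
  exact (abs_le.mp this).2

lemma bar_meas (σ : ℝ) (h : ℝ → ℝ) (hm : Measurable h) (x : ℝ) :
    Measurable (fun p : ℝ × ℝ => h p.2 * gq σ (p.1 * x - p.2)) := by
  have hg : Measurable (gq σ) := (gq_cont σ).measurable
  have h1 : Measurable (fun p : ℝ × ℝ => p.1 * x - p.2) := by fun_prop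
  exact (hm.comp measurable_snd).mul (hg.comp h1)

lemma prod_aux (f : ℝ × ℝ → ℝ) (hf : Measurable f) (C : ℝ)
    (h1 : ∀ t, Integrable (fun z => f (t, z))) (h2 : ∀ t, ∫ z, ‖f (t, z)‖ ≤ C) :
    Integrable f ((volume.restrict (Ioc (0:ℝ) 1)).prod volume) := by
  have hmeas : AEStronglyMeasurable f
      ((volume.restrict (Ioc (0:ℝ) 1)).prod volume) := hf.aestronglyMeasurable
  rw [integrable_prod_iff hmeas]
  refine ⟨Eventually.of_forall h1, ?_⟩
  refine Integrable.mono' (integrable_const C) hmeas.norm.integral_prod_right' ?_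
  refine Eventually.of_forall fun t => ?_
  rw [Real.norm_of_nonneg (integral_nonneg fun z => norm_nonneg _)]
  exact h2 t

lemma bar_integrable (σ : ℝ) (hσ : 0 < σ) (h : ℝ → ℝ) (hm : Measurable h) (C : ℝ)
    (hC : ∀ z, |h z| ≤ C) (x : ℝ) :
    Integrable (fun p : ℝ × ℝ => h p.2 * gq σ (p.1 * x - p.2))
      ((volume.restrict (Ioc (0:ℝ) 1)).prod volume) :=
  prod_aux _ (bar_meas σ h hm x) C (fun t => cv_integrable σ hσ h hm C hC (t * x))
    (fun t => bar_norm σ hσ h C hC (t * x))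

lemma sol_eq (σ : ℝ) (hσ : 0 < σ) (h : ℝ → ℝ) (hm : Measurable h) (C : ℝ)
    (hC : ∀ z, |h z| ≤ C) (α β x : ℝ) :
    ∫ z, (α * gq σ (x - z) + β * gqbar σ x z) * h z
      = α * cv σ h x + β * ∫ t in (0:ℝ)..1, cv σ h (t * x) := by
  have hb := bar_integrable σ hσ h hm C hC x
  have e : ∀ z, h z * gqbar σ x z = ∫ t in Ioc (0:ℝ) 1, h z * gq σ (t * x - z) := fun z => by
    rw [gqbar_eq, intervalIntegral.integral_of_le zero_le_one, integral_const_mul]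
  have hI2 : Integrable (fun z => h z * gqbar σ x z) := by
    simp only [e]
    exact hb.integral_prod_right
  have e2 : ∫ z, h z * gqbar σ x z = ∫ t in (0:ℝ)..1, cv σ h (t * x) := by
    simp only [e]
    rw [intervalIntegral.integral_of_le zero_le_one]
    exact (integral_integral_swap (f := fun t z => h z * gq σ (t * x - z)) hb).symm
  rw [← e2]
  unfold cv
  rw [← integral_const_mul, ← integral_const_mul,
    ← integral_add ((cv_integrable σ hσ h hm C hC x).const_mul α) (hI2.const_mul β)]
  congr 1; funext z; ring

lemma avg_tendsto (G : ℝ → ℝ) (hG : Monotone G) (C : ℝ) (hC : ∀ x, |G x| ≤ C)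
    (l : Filter ℝ) [l.IsCountablyGenerated]
    (hl : ∀ t : ℝ, 0 < t → Tendsto (fun x => t * x) l l) (c : ℝ) (hc : Tendsto G l (nhds c)) :
    Tendsto (fun x => ∫ t in (0:ℝ)..1, G (t * x)) l (nhds c) := by
  have e : c = ∫ t in (0:ℝ)..1, c := by simp
  rw [e]
  have := hG.measurable
  apply intervalIntegral.tendsto_integral_filter_of_dominated_convergence (fun _ => C)
  · exact Eventually.of_forall fun x =>
      (by fun_prop : Measurable (fun t => G (t * x))).aestronglyMeasurable
  · exact Eventually.of_forall fun x => Eventually.of_forall fun t _ => hC _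
  · simp
  · refine Eventually.of_forall fun t ht => ?_
    rw [uIoc_of_le zero_le_one] at ht
    exact hc.comp (hl t ht.1)

lemma avg_mono (G : ℝ → ℝ) (hG : Monotone G) (C : ℝ) (hC : ∀ x, |G x| ≤ C) :
    Monotone (fun x => ∫ t in (0:ℝ)..1, G (t * x)) := by
  have := hG.measurable
  have hi : ∀ x, IntervalIntegrable (fun t => G (t * x)) volume 0 1 := fun x => by
    rw [intervalIntegrable_iff_integrableOn_Ioc_of_le zero_le_one]
    exact Integrable.mono' (integrable_const C)
      (by fun_prop : Measurable (fun t => G (t * x))).aestronglyMeasurable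
      (Eventually.of_forall fun t => hC _)
  intro x y hxy
  exact intervalIntegral.integral_mono_on zero_le_one (hi x) (hi y)
    fun t ht => hG (mul_le_mul_of_nonneg_left hxy ht.1)

lemma le_rt (σ : ℝ) (hσ : 0 < σ) (A B : ℝ → ℝ) (hA : Measurable A) (hB : Measurable B)
    (C D : ℝ) (hC : ∀ z, |A z| ≤ C) (hD : ∀ z, |B z| ≤ D) (hp : ∀ z, 0 < B z) (c : ℝ)
    (hc : ∀ z, c * B z ≤ A z) (x : ℝ) : c ≤ cv σ A x / cv σ B x := by
  rw [le_div_iff₀ (cv_pos σ hσ B hB D hD hp x)]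
  have := cv_sub_smul σ hσ A B hA hB C D hC hD c x
  have h2 : 0 ≤ cv σ (fun z => A z - c * B z) x :=
    integral_nonneg fun z => mul_nonneg (by have := hc z; linarith) (gq_pos σ hσ _).le
  linarith

lemma rt_le (σ : ℝ) (hσ : 0 < σ) (A B : ℝ → ℝ) (hA : Measurable A) (hB : Measurable B)
    (C D : ℝ) (hC : ∀ z, |A z| ≤ C) (hD : ∀ z, |B z| ≤ D) (hp : ∀ z, 0 < B z) (c : ℝ)
    (hc : ∀ z, A z ≤ c * B z) (x : ℝ) : cv σ A x / cv σ B x ≤ c := by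
  rw [div_le_iff₀ (cv_pos σ hσ B hB D hD hp x)]
  have := cv_sub_smul σ hσ A B hA hB C D hC hD c x
  have h2 : cv σ (fun z => A z - c * B z) x ≤ 0 :=
    integral_nonpos fun z => mul_nonpos_of_nonpos_of_nonneg
      (by have := hc z; linarith) (gq_pos σ hσ _).le
  linarith

lemma rt_tendsto (σ : ℝ) (hσ : 0 < σ) (F B : ℝ → ℝ) (hF : Measurable F) (hB : Measurable B)
    (C D : ℝ) (hC : ∀ z, |F z * B z| ≤ C) (hD : ∀ z, |B z| ≤ D)
    (l : Filter ℝ) [l.IsCountablyGenerated]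
    (hl : ∀ u : ℝ, Tendsto (fun x => x - u) l l) (c p : ℝ) (hp : 0 < p)
    (hc : Tendsto F l (nhds c)) (hBp : Tendsto B l (nhds p)) :
    Tendsto (fun x => cv σ (fun z => F z * B z) x / cv σ B x) l (nhds c) := by
  have h1 := cv_tendsto σ hσ _ (hF.mul hB) C hC l hl _ (hc.mul hBp)
  have h2 := cv_tendsto σ hσ B hB D hD l hl p hBp
  have := h1.div h2 hp.ne'
  rwa [mul_div_cancel_right₀ _ hp.ne'] at this

section prob
variable {Ω : Type*} [MeasurableSpace Ω] (P : Measure Ω) [IsProbabilityMeasure P]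
    (V : Ω → ℝ)

lemma set_eq (hV : Integrable V P) (S : Set Ω) (hS : MeasurableSet S) (c : ℝ) :
    ∫ ω in S, V ω ∂P - c * (P S).toReal = ∫ ω, S.indicator (fun ω => V ω - c) ω ∂P := by
  rw [integral_indicator hS, integral_sub hV.integrableOn (integrable_const c)]
  simp [Measure.real, mul_comm]

lemma ind_int (hV : Integrable V P) (S : Set Ω) (hS : MeasurableSet S) (c : ℝ) :
    Integrable (S.indicator (fun ω => V ω - c)) P :=
  (hV.sub (integrable_const c)).indicator hS

lemma msp (hVmeas : Measurable V) (y : ℝ) : MeasurableSet {ω | V ω > y} :=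
  measurableSet_lt measurable_const hVmeas
lemma msm (hVmeas : Measurable V) (y : ℝ) : MeasurableSet {ω | V ω ≤ y} :=
  measurableSet_le hVmeas measurable_const

lemma plus_eq (hVmeas : Measurable V) (hV : Integrable V P) (c y : ℝ) :
    Phip P V y - c * Pip P V y
      = ∫ ω, ({ω | V ω > y} : Set Ω).indicator (fun ω => V ω - c) ω ∂P :=
  set_eq P V hV _ (msp V hVmeas y) c

lemma minus_eq (hVmeas : Measurable V) (hV : Integrable V P) (c y : ℝ) :
    Phim P V y - c * Pim P V y
      = ∫ ω, ({ω | V ω ≤ y} : Set Ω).indicator (fun ω => V ω - c) ω ∂P :=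
  set_eq P V hV _ (msm V hVmeas y) c

lemma Pip_anti : Antitone (Pip P V) := fun a b hab => by
  unfold Pip
  exact ENNReal.toReal_mono (measure_ne_top _ _)
    (measure_mono fun ω (hω : V ω > b) => lt_of_le_of_lt hab hω)

lemma Pim_mono : Monotone (Pim P V) := fun a b hab => by
  unfold Pim
  exact ENNReal.toReal_mono (measure_ne_top _ _)
    (measure_mono fun ω (hω : V ω ≤ a) => le_trans hω hab)

lemma Pip_abs (y : ℝ) : |Pip P V y| ≤ 1 := by
  unfold Pip; rw [abs_of_nonneg ENNReal.toReal_nonneg]; exact measureReal_le_one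
lemma Pim_abs (y : ℝ) : |Pim P V y| ≤ 1 := by
  unfold Pim; rw [abs_of_nonneg ENNReal.toReal_nonneg]; exact measureReal_le_one

variable {m M : ℝ}

lemma Pip_pos (hs : SuppIoo P V m M) (y : ℝ) (hy : y < M) : 0 < Pip P V y :=
  ENNReal.toReal_pos (hs.2.2.1 y hy).ne' (measure_ne_top _ _)
lemma Pim_pos (hs : SuppIoo P V m M) (y : ℝ) (hy : m < y) : 0 < Pim P V y :=
  ENNReal.toReal_pos (hs.2.2.2 y hy).ne' (measure_ne_top _ _)

lemma Phip_ge (hVmeas : Measurable V) (hV : Integrable V P) (hs : SuppIoo P V m M) (y : ℝ) :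
    m * Pip P V y ≤ Phip P V y := by
  rw [← sub_nonneg, plus_eq P V hVmeas hV]
  apply integral_nonneg_of_ae
  filter_upwards [hs.2.1] with ω hω
  simp only [indicator, Pi.zero_apply]; split_ifs <;> linarith [hω.1]

lemma Phip_le (hVmeas : Measurable V) (hV : Integrable V P) (hs : SuppIoo P V m M) (y : ℝ) :
    Phip P V y ≤ M * Pip P V y := by
  rw [← sub_nonpos, plus_eq P V hVmeas hV]
  apply integral_nonpos_of_ae
  filter_upwards [hs.2.1] with ω hω
  simp only [indicator, Pi.zero_apply]; split_ifs <;> linarith [hω.2]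

lemma Phim_ge (hVmeas : Measurable V) (hV : Integrable V P) (hs : SuppIoo P V m M) (y : ℝ) :
    m * Pim P V y ≤ Phim P V y := by
  rw [← sub_nonneg, minus_eq P V hVmeas hV]
  apply integral_nonneg_of_ae
  filter_upwards [hs.2.1] with ω hω
  simp only [indicator, Pi.zero_apply]; split_ifs <;> linarith [hω.1]

lemma Phim_le (hVmeas : Measurable V) (hV : Integrable V P) (hs : SuppIoo P V m M) (y : ℝ) :
    Phim P V y ≤ M * Pim P V y := by
  rw [← sub_nonpos, minus_eq P V hVmeas hV]
  apply integral_nonpos_of_ae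
  filter_upwards [hs.2.1] with ω hω
  simp only [indicator, Pi.zero_apply]; split_ifs <;> linarith [hω.2]

lemma abs_aux (A B m M : ℝ) (h1 : m * B ≤ A) (h2 : A ≤ M * B) (hB : |B| ≤ 1) :
    |A| ≤ |m| + |M| := by
  have e1 : |m * B| ≤ |m| := by
    rw [abs_mul]; exact mul_le_of_le_one_right (abs_nonneg _) hB
  have e2 : |M * B| ≤ |M| := by
    rw [abs_mul]; exact mul_le_of_le_one_right (abs_nonneg _) hB
  rw [abs_le] at *
  constructor <;> linarith [abs_nonneg m, abs_nonneg M]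

lemma Phip_meas (hVmeas : Measurable V) (hV : Integrable V P) (hs : SuppIoo P V m M) :
    Measurable (Phip P V) := by
  have h : Antitone (fun y => Phip P V y - m * Pip P V y) := fun a b hab => by
    simp only [plus_eq P V hVmeas hV]
    apply integral_mono_ae (ind_int P V hV _ (msp V hVmeas b) m)
      (ind_int P V hV _ (msp V hVmeas a) m)
    filter_upwards [hs.2.1] with ω hω
    simp only [indicator, mem_ofPred_eq]
    split_ifs <;> linarith [hω.1]
  have := h.measurable.add ((Pip_anti P V).measurable.const_mul m)
  convert this using 1
  funext y; simp

lemma Phim_meas (hVmeas : Measurable V) (hV : Integrable V P) (hs : SuppIoo P V m M) :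
    Measurable (Phim P V) := by
  have h : Monotone (fun y => Phim P V y - m * Pim P V y) := fun a b hab => by
    simp only [minus_eq P V hVmeas hV]
    apply integral_mono_ae (ind_int P V hV _ (msm V hVmeas a) m)
      (ind_int P V hV _ (msm V hVmeas b) m)
    filter_upwards [hs.2.1] with ω hω
    simp only [indicator, mem_ofPred_eq]
    split_ifs <;> linarith [hω.1]
  have := h.measurable.add ((Pim_mono P V).measurable.const_mul m)
  convert this using 1
  funext y; simp

lemma cross_p (hVmeas : Measurable V) (hV : Integrable V P) (c y y' : ℝ) (hy : y ≤ y')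
    (h : 0 ≤ Phip P V y - c * Pip P V y) : 0 ≤ Phip P V y' - c * Pip P V y' := by
  rw [plus_eq P V hVmeas hV] at *
  rcases le_or_gt c y' with hc | hc
  · apply integral_nonneg
    intro ω
    simp only [indicator, mem_ofPred_eq, Pi.zero_apply]
    split_ifs <;> linarith
  · apply h.trans
    apply integral_mono (ind_int P V hV _ (msp V hVmeas y) c)
      (ind_int P V hV _ (msp V hVmeas y') c)
    intro ω
    simp only [indicator, mem_ofPred_eq]
    split_ifs <;> linarith

lemma cross_m (hVmeas : Measurable V) (hV : Integrable V P) (hs : SuppIoo P V m M)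
    (c y y' : ℝ) (hmy : m < y) (hy : y ≤ y')
    (h : 0 ≤ Phim P V y - c * Pim P V y) : 0 ≤ Phim P V y' - c * Pim P V y' := by
  rcases le_or_gt c y with hc | hc
  · rw [minus_eq P V hVmeas hV] at *
    apply h.trans
    apply integral_mono (ind_int P V hV _ (msm V hVmeas y) c)
      (ind_int P V hV _ (msm V hVmeas y') c)
    intro ω
    simp only [indicator, mem_ofPred_eq]
    split_ifs <;> linarith
  · exfalso
    have h2 : Phim P V y - y * Pim P V y ≤ 0 := by
      rw [minus_eq P V hVmeas hV]
      apply integral_nonpos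
      intro ω
      simp only [indicator, mem_ofPred_eq, Pi.zero_apply]
      split_ifs <;> linarith
    have := Pim_pos P V hs y hmy
    nlinarith

lemma mean_p (hVmeas : Measurable V) (hV : Integrable V P) (y : ℝ) :
    (∫ ω, V ω ∂P) * Pip P V y ≤ Phip P V y := by
  set c := ∫ ω, V ω ∂P with hc
  rw [← sub_nonneg, plus_eq P V hVmeas hV]
  rcases le_or_gt c y with h | h
  · apply integral_nonneg
    intro ω
    simp only [indicator, mem_ofPred_eq, Pi.zero_apply]
    split_ifs <;> linarith
  · have e : ∫ ω, (V ω - c) ∂P = 0 := by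
      rw [integral_sub hV (integrable_const c)]; simp [hc]
    rw [← e]
    apply integral_mono (hV.sub (integrable_const c)) (ind_int P V hV _ (msp V hVmeas y) c)
    intro ω
    simp only [indicator, mem_ofPred_eq, Pi.sub_apply]
    split_ifs <;> linarith

lemma mean_m (hVmeas : Measurable V) (hV : Integrable V P) (y : ℝ) :
    Phim P V y ≤ (∫ ω, V ω ∂P) * Pim P V y := by
  set c := ∫ ω, V ω ∂P with hc
  rw [← sub_nonpos, minus_eq P V hVmeas hV]
  rcases le_or_gt y c with h | h
  · apply integral_nonpos
    intro ω
    simp only [indicator, mem_ofPred_eq, Pi.zero_apply]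
    split_ifs <;> linarith
  · have e : ∫ ω, (V ω - c) ∂P = 0 := by
      rw [integral_sub hV (integrable_const c)]; simp [hc]
    rw [← e]
    apply integral_mono (ind_int P V hV _ (msm V hVmeas y) c) (hV.sub (integrable_const c))
    intro ω
    simp only [indicator, mem_ofPred_eq, Pi.sub_apply]
    split_ifs <;> linarith

lemma gap_p (hVmeas : Measurable V) (hV : Integrable V P) (hs : SuppIoo P V m M)
    (L : ℝ) (hL : L < M) : ∃ a > 0, ∀ y ≤ L, (y + a) * Pip P V y ≤ Phip P V y := by
  have hi : Integrable (fun ω => max (V ω - L) 0) P := (hV.sub (integrable_const L)).pos_part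
  have ha : 0 < ∫ ω, max (V ω - L) 0 ∂P := by
    refine (integral_pos_iff_support_of_nonneg (f := fun ω => max (V ω - L) 0)
      (fun ω => le_max_right _ _) hi).mpr ?_
    refine (hs.2.2.1 L hL).trans_le (measure_mono fun ω (hω : V ω > L) => ?_)
    have : 0 < max (V ω - L) 0 := lt_max_of_lt_left (by linarith)
    exact this.ne'
  refine ⟨_, ha, fun y hy => ?_⟩
  have h1 : ∫ ω, max (V ω - L) 0 ∂P ≤ Phip P V y - y * Pip P V y := by
    rw [plus_eq P V hVmeas hV]
    apply integral_mono hi (ind_int P V hV _ (msp V hVmeas y) y)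
    intro ω
    simp only [indicator, mem_ofPred_eq]
    split_ifs
    · exact max_le (by linarith) (by linarith)
    · exact max_le (by linarith) (by linarith)
  have h2 := (abs_le.mp (Pip_abs P V y)).2
  nlinarith

lemma gap_m (hVmeas : Measurable V) (hV : Integrable V P) (hs : SuppIoo P V m M)
    (L : ℝ) (hL : m < L) : ∃ a > 0, ∀ y ≥ L, Phim P V y ≤ (y - a) * Pim P V y := by
  have hi : Integrable (fun ω => max (L - V ω) 0) P := ((integrable_const L).sub hV).pos_part
  have ha : 0 < ∫ ω, max (L - V ω) 0 ∂P := by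
    refine (integral_pos_iff_support_of_nonneg (f := fun ω => max (L - V ω) 0)
      (fun ω => le_max_right _ _) hi).mpr ?_
    refine (hs.2.2.2 ((m + L) / 2) (by linarith)).trans_le
      (measure_mono fun ω (hω : V ω ≤ (m + L) / 2) => ?_)
    have : 0 < max (L - V ω) 0 := lt_max_of_lt_left (by linarith)
    exact this.ne'
  refine ⟨_, ha, fun y hy => ?_⟩
  have h1 : Phim P V y - y * Pim P V y ≤ - ∫ ω, max (L - V ω) 0 ∂P := by
    rw [minus_eq P V hVmeas hV, ← integral_neg]
    apply integral_mono (ind_int P V hV _ (msm V hVmeas y) y) hi.neg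
    intro ω
    simp only [indicator, mem_ofPred_eq, Pi.neg_apply]
    have h0 : max (L - V ω) 0 ≤ if V ω ≤ y then y - V ω else 0 := by
      split_ifs
      · exact max_le (by linarith) (by linarith)
      · exact max_le (by linarith) (by linarith)
    split_ifs at * <;> linarith
  have h2 := (abs_le.mp (Pim_abs P V y)).2
  nlinarith

end prob

/-- Any continuous nondecreasing solution of (E) with values in `(m,M)` tends to `M`
at `+∞`, to `m` at `−∞`, and is strictly increasing. -/
theorem stmt11 {Ω : Type*} [MeasurableSpace Ω] (P : Measure Ω) [IsProbabilityMeasure P]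
    (V : Ω → ℝ) (hVmeas : Measurable V) (hV : Integrable V P)
    (m M : ℝ) (hsupp : SuppIoo P V m M)
    (σ : ℝ) (hσ : 0 < σ) (N : ℕ) (hN : 1 ≤ N)
    (F : ℝ → ℝ) (hFc : Continuous F) (hFm : Monotone F)
    (hFr : ∀ x, F x ∈ Set.Ioo m M)
    (hFsol : SolvesE P V σ N F) :
    Tendsto F atTop (nhds M) ∧ Tendsto F atBot (nhds m) ∧ StrictMono F := by
  obtain ⟨hmM, -⟩ := id hsupp
  set C := |m| + |M| with hCdef
  have hFmeas := hFc.measurable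
  set Ap := fun z => Phip P V (F z) with hAp
  set Bp := fun z => Pip P V (F z) with hBp
  set Am := fun z => Phim P V (F z) with hAm
  set Bm := fun z => Pim P V (F z) with hBm
  have mAp : Measurable Ap := (Phip_meas P V hVmeas hV hsupp).comp hFmeas
  have mAm : Measurable Am := (Phim_meas P V hVmeas hV hsupp).comp hFmeas
  have aBp : Antitone Bp := fun a b hab => Pip_anti P V (hFm hab)
  have aBm : Monotone Bm := fun a b hab => Pim_mono P V (hFm hab)
  have bAp : ∀ z, |Ap z| ≤ C := fun z => abs_aux _ _ m M (Phip_ge P V hVmeas hV hsupp _)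
    (Phip_le P V hVmeas hV hsupp _) (Pip_abs P V _)
  have bAm : ∀ z, |Am z| ≤ C := fun z => abs_aux _ _ m M (Phim_ge P V hVmeas hV hsupp _)
    (Phim_le P V hVmeas hV hsupp _) (Pim_abs P V _)
  have bBp : ∀ z, |Bp z| ≤ 1 := fun z => Pip_abs P V _
  have bBm : ∀ z, |Bm z| ≤ 1 := fun z => Pim_abs P V _
  have pBp : ∀ z, 0 < Bp z := fun z => Pip_pos P V hsupp _ (hFr z).2
  have pBm : ∀ z, 0 < Bm z := fun z => Pim_pos P V hsupp _ (hFr z).1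
  set h := phig P V σ F with hh
  have hpos : ∀ x, 0 ≤ x → h x = cv σ Ap x / cv σ Bp x := fun x hx => by
    rw [hh, phig, if_pos hx]; rfl
  have hneg : ∀ x, x < 0 → h x = cv σ Am x / cv σ Bm x := fun x hx => by
    rw [hh, phig, if_neg (not_le.mpr hx)]; rfl
  have mp := rt_mono σ hσ Ap Bp mAp aBp.measurable C 1 bAp bBp pBp
    (fun c z z' hz => cross_p P V hVmeas hV c _ _ (hFm hz))
  have mm := rt_mono σ hσ Am Bm mAm aBm.measurable C 1 bAm bBm pBm
    (fun c z z' hz => cross_m P V hVmeas hV hsupp c _ _ (hFr z).1 (hFm hz))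
  have hmono : Monotone h := by
    intro x y hxy
    rcases le_or_gt 0 x with hx | hx
    · rw [hpos x hx, hpos y (hx.trans hxy)]; exact mp hxy
    · rcases le_or_gt 0 y with hy | hy
      · rw [hneg x hx, hpos y hy]
        exact (rt_le σ hσ Am Bm mAm aBm.measurable C 1 bAm bBm pBm _
            (fun z => mean_m P V hVmeas hV _) x).trans
          (le_rt σ hσ Ap Bp mAp aBp.measurable C 1 bAp bBp pBp _
            (fun z => mean_p P V hVmeas hV _) y)
      · rw [hneg x hx, hneg y hy]; exact mm hxy
  have hlow : ∀ x, m ≤ h x := fun x => by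
    rcases le_or_gt 0 x with hx | hx
    · rw [hpos x hx]
      exact le_rt σ hσ Ap Bp mAp aBp.measurable C 1 bAp bBp pBp _
            (fun z => Phip_ge P V hVmeas hV hsupp _) x
    · rw [hneg x hx]
      exact le_rt σ hσ Am Bm mAm aBm.measurable C 1 bAm bBm pBm _
            (fun z => Phim_ge P V hVmeas hV hsupp _) x
  have hhigh : ∀ x, h x ≤ M := fun x => by
    rcases le_or_gt 0 x with hx | hx
    · rw [hpos x hx]
      exact rt_le σ hσ Ap Bp mAp aBp.measurable C 1 bAp bBp pBp _
            (fun z => Phip_le P V hVmeas hV hsupp _) x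
    · rw [hneg x hx]
      exact rt_le σ hσ Am Bm mAm aBm.measurable C 1 bAm bBm pBm _
            (fun z => Phim_le P V hVmeas hV hsupp _) x
  have hbd : ∀ x, |h x| ≤ C := fun x =>
    abs_aux _ 1 m M (by simpa using hlow x) (by simpa using hhigh x) (by simp)
  have hFbd : ∀ x, |F x| ≤ C := fun x =>
    abs_aux _ 1 m M (by simpa using (hFr x).1.le) (by simpa using (hFr x).2.le) (by simp)
  set G := cv σ h with hG
  have Gmono : Monotone G := cv_mono σ hσ h hmono C hbd
  have Gbd : ∀ x, |G x| ≤ C := cv_abs σ hσ h C hbd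
  have hN0 : (0:ℝ) < N := by exact_mod_cast hN
  have hFeq : ∀ x, F x = 1 / (N:ℝ) * G x + ((N:ℝ) - 1) / N * ∫ t in (0:ℝ)..1, G (t * x) :=
    fun x => (hFsol x).trans (sol_eq σ hσ h hmono.measurable C hbd _ _ x)
  have top_sub : ∀ u : ℝ, Tendsto (fun x : ℝ => x - u) atTop atTop := fun u =>
    tendsto_atTop_add_const_right _ (-u) tendsto_id
  have bot_sub : ∀ u : ℝ, Tendsto (fun x : ℝ => x - u) atBot atBot := fun u =>
    tendsto_atBot_add_const_right _ (-u) tendsto_id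
  have Flim : ∀ (l : Filter ℝ) [l.IsCountablyGenerated],
      (∀ t : ℝ, 0 < t → Tendsto (fun x => t * x) l l) → ∀ c, Tendsto G l (nhds c) →
      Tendsto F l (nhds c) := by
    intro l _ hl c hc
    have h1 := avg_tendsto G Gmono C Gbd l hl c hc
    have h2 := (hc.const_mul (1 / (N:ℝ))).add (h1.const_mul (((N:ℝ) - 1) / N))
    have e : 1 / (N:ℝ) * c + ((N:ℝ) - 1) / N * c = c := by field_simp; ring
    rw [e] at h2
    exact h2.congr fun x => (hFeq x).symm
  -- limits of h
  have htop : Tendsto h atTop (nhds (⨆ x, h x)) :=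
    tendsto_atTop_ciSup hmono ⟨M, by rintro _ ⟨x, rfl⟩; exact hhigh x⟩
  have hbot : Tendsto h atBot (nhds (⨅ x, h x)) :=
    tendsto_atBot_ciInf hmono ⟨m, by rintro _ ⟨x, rfl⟩; exact hlow x⟩
  generalize (⨆ x, h x) = b at htop
  generalize (⨅ x, h x) = a at hbot
  have Gtop : Tendsto G atTop (nhds b) := cv_tendsto σ hσ h hmono.measurable C hbd _ top_sub b htop
  have Gbot : Tendsto G atBot (nhds a) := cv_tendsto σ hσ h hmono.measurable C hbd _ bot_sub a hbot
  have Ftop : Tendsto F atTop (nhds b) :=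
    Flim atTop (fun t ht => tendsto_id.const_mul_atTop ht) b Gtop
  have Fbot : Tendsto F atBot (nhds a) :=
    Flim atBot (fun t ht => tendsto_id.const_mul_atBot ht) a Gbot
  have hbM : b = M := by
    have hle : b ≤ M := le_of_tendsto htop (Eventually.of_forall hhigh)
    by_contra hne
    have hlt : b < M := lt_of_le_of_ne hle hne
    obtain ⟨e, he, hgap⟩ := gap_p P V hVmeas hV hsupp b hlt
    have hFb : ∀ x, F x ≤ b := fun x => hFm.ge_of_tendsto Ftop x
    have hB0 : ∀ z, Pip P V b ≤ Bp z := fun z => Pip_anti P V (hFb z)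
    have Blim := tendsto_atTop_ciInf aBp ⟨Pip P V b, by rintro _ ⟨x, rfl⟩; exact hB0 x⟩
    have hp : 0 < ⨅ z, Bp z := (Pip_pos P V hsupp b hlt).trans_le (le_ciInf hB0)
    have cbd : ∀ z, |(F z + e) * Bp z| ≤ (C + |e|) * 1 := fun z => by
      rw [abs_mul]
      exact mul_le_mul ((abs_add_le _ _).trans (by linarith [hFbd z])) (bBp z) (abs_nonneg _)
        (by positivity)
    have hFe : Measurable (fun z => F z + e) := hFmeas.add_const e
    have lim := rt_tendsto σ hσ (fun z => F z + e) Bp hFe aBp.measurable _ 1 cbd bBp atTop top_sub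
      (b + e) _ hp (Ftop.add_const e) Blim
    have : b + e ≤ b := by
      apply le_of_tendsto_of_tendsto lim htop
      filter_upwards [eventually_ge_atTop (0:ℝ)] with x hx
      rw [hpos x hx]
      apply div_le_div_of_nonneg_right _ (cv_pos σ hσ Bp aBp.measurable 1 bBp pBp x).le
      exact cv_mono_fun σ hσ _ _ (hFe.mul aBp.measurable) mAp _ C cbd bAp
        (fun z => hgap (F z) (hFb z)) x
    linarith
  have ham : a = m := by
    have hle : m ≤ a := ge_of_tendsto hbot (Eventually.of_forall hlow)
    by_contra hne
    have hlt : m < a := lt_of_le_of_ne hle (Ne.symm hne)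
    obtain ⟨e, he, hgap⟩ := gap_m P V hVmeas hV hsupp a hlt
    have hFb : ∀ x, a ≤ F x := fun x => hFm.le_of_tendsto Fbot x
    have hB0 : ∀ z, Pim P V a ≤ Bm z := fun z => Pim_mono P V (hFb z)
    have Blim := tendsto_atBot_ciInf aBm ⟨Pim P V a, by rintro _ ⟨x, rfl⟩; exact hB0 x⟩
    have hp : 0 < ⨅ z, Bm z := (Pim_pos P V hsupp a hlt).trans_le (le_ciInf hB0)
    have cbd : ∀ z, |(F z - e) * Bm z| ≤ (C + |e|) * 1 := fun z => by
      rw [abs_mul]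
      exact mul_le_mul ((abs_sub _ _).trans (by linarith [hFbd z])) (bBm z) (abs_nonneg _)
        (by positivity)
    have hFe : Measurable (fun z => F z - e) := hFmeas.sub_const e
    have lim := rt_tendsto σ hσ (fun z => F z - e) Bm hFe aBm.measurable _ 1 cbd bBm atBot bot_sub
      (a - e) _ hp (Fbot.sub_const e) Blim
    have : a ≤ a - e := by
      apply le_of_tendsto_of_tendsto hbot lim
      filter_upwards [eventually_lt_atBot (0:ℝ)] with x hx
      rw [hneg x hx]
      apply div_le_div_of_nonneg_right _ (cv_pos σ hσ Bm aBm.measurable 1 bBm pBm x).le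
      exact cv_mono_fun σ hσ _ _ mAm (hFe.mul aBm.measurable) C _ bAm cbd
        (fun z => hgap (F z) (hFb z)) x
    linarith
  refine ⟨hbM ▸ Ftop, ham ▸ Fbot, ?_⟩
  have Gstrict : StrictMono G := cv_strictMono σ hσ h hmono C hbd a b
    (by rw [ham, hbM]; exact hmM.ne) Gtop Gbot
  intro x y hxy
  rw [hFeq x, hFeq y]
  apply add_lt_add_of_lt_of_le
  · exact mul_lt_mul_of_pos_left (Gstrict hxy) (by positivity)
  · apply mul_le_mul_of_nonneg_left (avg_mono G Gmono C Gbd hxy.le)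
    have : (1:ℝ) ≤ N := by exact_mod_cast hN
    apply div_nonneg _ hN0.le
    linarith
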